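/- arXiv:1604.00888 — 3 statements merged into one kernel-verified Lean document; each statement's English description precedes it below -/
import Mathlib

section
/- Fix 0 < ε < 1, let p : ℕ → ℝ satisfy 0 ≤ p(n) ≤ 1 − ε for all n, and let r : ℕ → ℕ satisfy r(n) ≥ 1 for all n. Suppose p(n)·√n / (r(n)·log n) → ∞ as n → ∞. Let q(n) denote the Erdős–Rényi probability that a graph drawn from G(n, p(n)) does NOT contain r(n) pairwise edge-disjoint Hamilton cycles. Then log q(n) / (n · log(1 − p(n))) → 1 as n → ∞; that is, the failure probability equals (1 − p(n))^{(1+o(1))n}. -/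
open Classical in
/-- The Erdős–Rényi probability that a graph drawn from `G(n, p)` satisfies property `A`. -/
noncomputable def erProb (n : ℕ) (p : ℝ) (A : SimpleGraph (Fin n) → Prop) : ℝ :=
  ∑ G : SimpleGraph (Fin n),
    if A G then p ^ G.edgeSet.ncard * (1 - p) ^ (n.choose 2 - G.edgeSet.ncard) else 0

/-- `G` contains `r` pairwise edge-disjoint Hamilton cycles. -/
def SimpleGraph.HasEdgeDisjointHamCycles {V : Type*} [DecidableEq V]
    (G : SimpleGraph V) (r : ℕ) : Prop :=
  ∃ c : Fin r → Σ a : V, G.Walk a a,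
    (∀ i, (c i).2.IsHamiltonianCycle) ∧
    ∀ i j, i ≠ j → ∀ e ∈ (c i).2.edges, e ∉ (c j).2.edges

/-!
If fewer than `r` edge-disjoint Hamilton cycles have been found, deleting them lowers every degree
by less than `2r`. By the Chvátal–Erdős theorem the remaining graph is Hamiltonian unless it has an
independent set of size `k`, or two nonempty sets without edges between them that cover all but
fewer than `k` vertices. Hence if `G` does not contain `r` edge-disjoint Hamilton cycles, then some
`k`-set spans at most `2rk` edges, or two such sets, the smaller of size `a`, are joined by at most
`2ra` edges. With `k` of order `√n`, either configuration forces `(1 - o(1)) n` prescribed edges to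
be missing, and the hypothesis on `p` makes the entropy of the choices negligible against
`n log (1 / (1 - p))`, so the union bound gives `(1 - p) ^ ((1 - o(1)) n)`. Conversely, a fixed
vertex is isolated with probability `(1 - p) ^ (n - 1)`.
-/

section LongestCycle

variable {V : Type*} {G : SimpleGraph V} {c : Cycle V} {x y : V}

/-- A cycle of a graph, recorded as the cyclic sequence of its vertices. The empty sequence and the
two ends of an edge count as cycles. -/
structure IsGraphCycle (G : SimpleGraph V) (c : Cycle V) : Prop where
  nodup : c.Nodup
  chain : c.Chain G.Adj

/-- `G` has an ear of `c` from `x` to `y`: a path from `x` to `y` with at least one interior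
vertex, all of whose interior vertices avoid `c`. The list `p` records the interior vertices. -/
def HasEar (G : SimpleGraph V) (c : Cycle V) (x y : V) : Prop :=
  ∃ p : List V, p ≠ [] ∧ p.Nodup ∧ (∀ z ∈ p, z ∉ c) ∧ (x :: (p ++ [y])).IsChain G.Adj

lemma exists_eq_coe_cons_of_mem (hx : x ∈ c) : ∃ s : List V, c = ↑(x :: s) := by
  induction c using Quotient.inductionOn' with | h l =>
  obtain ⟨s, t, rfl⟩ := List.append_of_mem (Cycle.mem_coe_iff.1 hx)
  exact ⟨t ++ s, Cycle.coe_eq_coe.2 (by simpa using List.isRotated_append (l := s) (l' := x :: t))⟩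

section FormPerm

variable [DecidableEq V] {s t : List V}

lemma formPerm_cons_apply_self (h : (x :: s).Nodup) :
    (x :: s).formPerm x = (s ++ [x]).head (by simp) := by
  cases s with
  | nil => simp
  | cons y s => exact List.formPerm_apply_head x y s h

lemma formPerm_cons_append_cons_apply_left (h : (x :: (s ++ y :: t)).Nodup) :
    (x :: (s ++ y :: t)).formPerm x = (s ++ [y]).head (by simp) := by
  rw [formPerm_cons_apply_self h]
  cases s <;> simp

lemma formPerm_cons_append_cons_apply_right (h : (x :: (s ++ y :: t)).Nodup) :
    (x :: (s ++ y :: t)).formPerm y = (t ++ [x]).head (by simp) := by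
  have hrot : x :: (s ++ y :: t) ~r y :: (t ++ x :: s) := by
    simpa using List.isRotated_append (l := x :: s) (l' := y :: t)
  rw [List.formPerm_eq_of_isRotated h hrot,
    formPerm_cons_append_cons_apply_left (hrot.nodup_iff.1 h)]

lemma exists_mem_notMem_of_formPerm_notMem (hc : c.Nodup) (hlen : 0 < c.length) {T : Set V}
    (hT : ∀ x ∈ T, c.formPerm hc x ∉ T) : ∃ y ∈ c, y ∉ T := by
  obtain ⟨y, hy⟩ : ∃ y, y ∈ c := by
    induction c using Quotient.inductionOn' with | h l =>
    exact List.exists_mem_of_length_pos hlen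
  by_cases hyT : y ∈ T
  · refine ⟨c.formPerm hc y, ?_, hT y hyT⟩
    rw [Cycle.formPerm_apply_mem_eq_next _ _ _ hy]
    exact Cycle.next_mem _ _ _ _
  · exact ⟨y, hy, hyT⟩

end FormPerm

lemma isChain_adj_cons_reverse_append {s t : List V} (hs : (s ++ [y]).IsChain G.Adj)
    (ht : t.IsChain G.Adj) (hne : t ≠ []) (hadj : G.Adj ((s ++ [y]).head (by simp)) (t.head hne)) :
    (y :: (s.reverse ++ t)).IsChain G.Adj := by
  rw [← List.cons_append, ← List.reverse_concat']
  refine .append ?_ ht fun a ha b hb => ?_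
  · rw [List.isChain_reverse]
    exact hs.imp fun _ _ h => h.symm
  · rw [List.getLast?_reverse, List.head?_eq_some_head (by simp)] at ha
    rw [List.head?_eq_some_head hne] at hb
    cases ha
    cases hb
    exact hadj

lemma mk_notMem_edges_of_isPath {w : G.Walk x y} (hw : w.IsPath) (hlen : 2 ≤ w.length) :
    s(y, x) ∉ w.edges := by
  cases w with
  | nil => simp at hlen
  | @cons _ z _ h q =>
    rw [SimpleGraph.Walk.cons_isPath_iff] at hw
    rw [SimpleGraph.Walk.edges_cons, List.mem_cons, not_or]
    refine ⟨fun he => ?_, fun he => hw.2 (q.snd_mem_support_of_mem_edges he)⟩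
    obtain rfl : y = z := (Sym2.eq_iff.1 he).elim (fun h' => absurd h'.2 h.ne) And.left
    have := SimpleGraph.Walk.length_eq_zero_iff.2 (SimpleGraph.Walk.isPath_iff_nil.1 hw.1)
    rw [SimpleGraph.Walk.length_cons] at hlen
    omega

namespace IsGraphCycle

lemma isHamiltonian [Fintype V] [DecidableEq V] (hc : IsGraphCycle G c) (hall : ∀ v, v ∈ c)
    (hcard : 3 ≤ Fintype.card V) : G.IsHamiltonian := by
  intro _
  induction c using Quotient.inductionOn' with | h l =>
  have hn : l.Nodup := hc.nodup
  have hlen : l.length = Fintype.card V := by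
    rw [← List.toFinset_card_of_nodup hn, ← Finset.card_univ]
    exact congrArg _ (Finset.eq_univ_of_forall fun v => List.mem_toFinset.2 (hall v))
  obtain _ | ⟨a, l⟩ := l
  · simp only [List.length_nil] at hlen
    omega
  have hchain := Cycle.chain_coe_cons _ a l |>.1 hc.chain
  rw [← List.cons_append, List.isChain_append] at hchain
  have hadj : G.Adj ((a :: l).getLast (by simp)) ((a :: l).head (by simp)) :=
    hchain.2.2 _ (List.getLast?_eq_getLast_of_ne_nil (by simp)) a (by simp)
  let w := SimpleGraph.Walk.ofSupport (a :: l) (by simp) hchain.1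
  have hw : w.support = a :: l := SimpleGraph.Walk.support_ofSupport _ _
  have hwp : w.IsPath := by rwa [SimpleGraph.Walk.isPath_def, hw]
  have hwlen : w.length + 1 = Fintype.card V := by
    rw [← hlen, ← w.length_support, hw]
  refine ⟨_, .cons hadj w, ?_⟩
  rw [SimpleGraph.Walk.isHamiltonianCycle_iff_isCycle_and_length_eq,
    SimpleGraph.Walk.cons_isCycle_iff]
  exact ⟨⟨hwp, mk_notMem_edges_of_isPath hwp (by omega)⟩, hwlen⟩

section Extension

variable [DecidableEq V]

lemma exists_longer_of_hasEar_next (hc : IsGraphCycle G c) (hx : x ∈ c)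
    (hear : HasEar G c x (c.formPerm hc.nodup x)) :
    ∃ c', IsGraphCycle G c' ∧ c.length < c'.length := by
  obtain ⟨s, rfl⟩ := exists_eq_coe_cons_of_mem hx
  obtain ⟨p, hp, hpn, hpc, hchain⟩ := hear
  have hn : (x :: s).Nodup := hc.nodup
  obtain ⟨z, u, hs⟩ : ∃ z u, s ++ [x] = z :: u := List.exists_cons_of_ne_nil (by simp)
  have hz : (x :: s).formPerm x = z := by simp [formPerm_cons_apply_self hn, hs]
  rw [show (↑(x :: s) : Cycle V).formPerm hc.nodup x = z from hz] at hchain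
  refine ⟨↑(x :: (p ++ s)), ⟨?_, ?_⟩, ?_⟩
  · rw [Cycle.nodup_coe_iff, ← List.perm_middle.nodup_iff]
    exact hpn.append hn fun v hv hvc => hpc v hv hvc
  · have hu := hc.chain
    rw [Cycle.chain_coe_cons, hs] at hu
    rw [Cycle.chain_coe_cons, List.append_assoc, hs, List.isChain_cons_split]
    exact ⟨hchain, hu.tail⟩
  · have := List.length_pos_iff.2 hp
    simp only [Cycle.length_coe, List.length_cons, List.length_append]
    omega

lemma exists_longer_of_hasEar_of_adj_next (hc : IsGraphCycle G c) (hx : x ∈ c) (hy : y ∈ c)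
    (hear : HasEar G c x y) (hadj : G.Adj (c.formPerm hc.nodup x) (c.formPerm hc.nodup y)) :
    ∃ c', IsGraphCycle G c' ∧ c.length < c'.length := by
  have hxy : y ≠ x := by
    rintro rfl
    exact hadj.ne rfl
  obtain ⟨l, rfl⟩ := exists_eq_coe_cons_of_mem hx
  obtain ⟨s, t, rfl⟩ := List.append_of_mem (List.mem_of_ne_of_mem hxy (Cycle.mem_coe_iff.1 hy))
  obtain ⟨p, hp, hpn, hpc, hchain⟩ := hear
  have hn : (x :: (s ++ y :: t)).Nodup := hc.nodup
  change G.Adj ((x :: (s ++ y :: t)).formPerm x) ((x :: (s ++ y :: t)).formPerm y) at hadj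
  rw [formPerm_cons_append_cons_apply_left hn, formPerm_cons_append_cons_apply_right hn] at hadj
  refine ⟨↑(x :: (p ++ (y :: s.reverse ++ t))), ⟨?_, ?_⟩, ?_⟩
  · rw [Cycle.nodup_coe_iff]
    have hperm : (p ++ (x :: (s ++ y :: t))).Perm (x :: (p ++ (y :: s.reverse ++ t))) := by
      refine List.perm_middle.trans ((List.Perm.append_left p ?_).cons x)
      exact List.perm_middle.trans (((List.reverse_perm s).symm.append_right t).cons y)
    exact hperm.nodup_iff.1 (hpn.append hn fun v hv hvc => hpc v hv hvc)
  · have hu := hc.chain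
    rw [Cycle.chain_coe_cons, List.append_assoc, List.cons_append, List.isChain_cons_split] at hu
    rw [Cycle.chain_coe_cons, List.append_assoc, List.append_assoc, List.cons_append,
      List.isChain_cons_split]
    exact ⟨hchain, isChain_adj_cons_reverse_append hu.1.tail hu.2.tail _ hadj⟩
  · have := List.length_pos_iff.2 hp
    simp only [Cycle.length_coe, List.length_cons, List.length_append, List.length_reverse]
    omega

end Extension

end IsGraphCycle

lemma exists_isGraphCycle_forall_length_le [Finite V] (G : SimpleGraph V) :
    ∃ c, IsGraphCycle G c ∧ ∀ c', IsGraphCycle G c' → c'.length ≤ c.length := by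
  classical
  have := Fintype.ofFinite V
  have hfin : {c | IsGraphCycle G c}.Finite :=
    (show {c : Cycle V | c.Nodup}.Finite from
      inferInstanceAs (Finite {c : Cycle V // c.Nodup})).subset fun c hc => hc.nodup
  have hnil : IsGraphCycle G Cycle.nil := ⟨List.nodup_nil, Cycle.Chain.nil _⟩
  exact Set.exists_max_image _ Cycle.length hfin ⟨_, hnil⟩

end LongestCycle

section ChvatalErdos

variable {V : Type*} {G : SimpleGraph V} {S : Set V} {c : Cycle V} {k : ℕ} {v x y : V}

/-- The vertices that can be reached from `v` by a walk of `G` avoiding `S`. -/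
def avoidingComponent (G : SimpleGraph V) (S : Set V) (v : V) : Set V :=
  {x | ∃ w : G.Walk v x, ∀ z ∈ w.support, z ∉ S}

/-- The vertices of `S` adjacent to some vertex reached from `v` by a walk avoiding `S`. -/
def attachments (G : SimpleGraph V) (S : Set V) (v : V) : Set V :=
  {x ∈ S | ∃ y ∈ avoidingComponent G S v, G.Adj x y}

/-- `k`-connectedness in terms of separations: two disjoint nonempty sets of vertices that cover
all but fewer than `k` vertices are joined by an edge. No lower bound on the number of vertices is
imposed. -/
def IsVertexConnected [Fintype V] (G : SimpleGraph V) (k : ℕ) : Prop :=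
  ∀ ⦃A B : Finset V⦄, A.Nonempty → B.Nonempty → Disjoint A B →
    Fintype.card V < A.card + B.card + k → ∃ a ∈ A, ∃ b ∈ B, G.Adj a b

lemma self_mem_avoidingComponent (hv : v ∉ S) : v ∈ avoidingComponent G S v :=
  ⟨.nil, by simpa using hv⟩

lemma notMem_of_mem_avoidingComponent (hx : x ∈ avoidingComponent G S v) : x ∉ S := by
  obtain ⟨w, hw⟩ := hx
  exact hw x w.end_mem_support

lemma mem_avoidingComponent_of_adj (hx : x ∈ avoidingComponent G S v) (hy : y ∉ S)
    (hadj : G.Adj x y) : y ∈ avoidingComponent G S v := by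
  obtain ⟨w, hw⟩ := hx
  refine ⟨w.concat hadj, fun z hz => ?_⟩
  rw [SimpleGraph.Walk.support_concat, List.mem_append, List.mem_singleton] at hz
  rcases hz with hz | rfl
  exacts [hw z hz, hy]

lemma disjoint_avoidingComponent_attachments :
    Disjoint (avoidingComponent G S v) (attachments G S v) :=
  Set.disjoint_left.2 fun _ hx hx' => notMem_of_mem_avoidingComponent hx hx'.1

lemma mem_attachments_of_adj (hx : x ∈ avoidingComponent G S v) (hadj : G.Adj x y)
    (hy : y ∉ avoidingComponent G S v) : y ∈ attachments G S v := by
  by_cases hyS : y ∈ S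
  · exact ⟨hyS, x, hx, hadj.symm⟩
  · exact absurd (mem_avoidingComponent_of_adj hx hyS hadj) hy

lemma hasEar_of_mem_attachments (hx : x ∈ attachments G {z | z ∈ c} v)
    (hy : y ∈ attachments G {z | z ∈ c} v) : HasEar G c x y := by
  classical
  obtain ⟨-, a, ⟨wa, hwa⟩, hxa⟩ := hx
  obtain ⟨-, b, ⟨wb, hwb⟩, hyb⟩ := hy
  let w := (wa.reverse.append wb).bypass
  refine ⟨w.support, w.support_ne_nil, (SimpleGraph.Walk.bypass_isPath _).support_nodup,
    fun z hz => ?_, ?_⟩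
  · have hz' := SimpleGraph.Walk.support_bypass_subset_support _ hz
    rw [SimpleGraph.Walk.mem_support_append_iff, SimpleGraph.Walk.support_reverse,
      List.mem_reverse] at hz'
    exact hz'.elim (hwa z) (hwb z)
  · simpa [SimpleGraph.Walk.support_concat] using
      (SimpleGraph.Walk.cons hxa (w.concat hyb.symm)).isChain_adj_support

lemma IsVertexConnected.le_ncard_attachments [Fintype V] (hconn : IsVertexConnected G k)
    (hv : v ∉ S) (hne : ∃ y ∈ S, y ∉ attachments G S v) : k ≤ (attachments G S v).ncard := by
  classical
  by_contra! hlt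
  let H := (avoidingComponent G S v).toFinset
  let T := (attachments G S v).toFinset
  have hHT : Disjoint H T := Set.disjoint_toFinset.2 disjoint_avoidingComponent_attachments
  obtain ⟨y, hyS, hyT⟩ := hne
  have hvH : v ∈ H := Set.mem_toFinset.2 (self_mem_avoidingComponent hv)
  have hyHT : y ∈ (H ∪ T)ᶜ := by
    simp only [Finset.mem_compl, Finset.mem_union, H, T, Set.mem_toFinset, not_or]
    exact ⟨fun h => notMem_of_mem_avoidingComponent h hyS, hyT⟩
  have hcard : Fintype.card V < H.card + (H ∪ T)ᶜ.card + k := by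
    have h := Finset.card_add_card_compl (H ∪ T)
    rw [Finset.card_union_of_disjoint hHT] at h
    have hT : (attachments G S v).ncard = T.card := Set.ncard_eq_toFinset_card' _
    omega
  obtain ⟨a, ha, b, hb, hab⟩ := hconn ⟨v, hvH⟩ ⟨y, hyHT⟩
    (disjoint_compl_right.mono_left Finset.subset_union_left) hcard
  simp only [Finset.mem_compl, Finset.mem_union, H, T, Set.mem_toFinset, not_or] at ha hb
  exact hb.2 (mem_attachments_of_adj ha hab hb.1)

lemma IsVertexConnected.exists_adj [Fintype V] (hconn : IsVertexConnected G k) (hk : 0 < k)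
    (hcard : 2 ≤ Fintype.card V) : ∃ x y, G.Adj x y := by
  classical
  have : Nontrivial V := Fintype.one_lt_card_iff_nontrivial.1 hcard
  obtain ⟨x, y, hxy⟩ := exists_pair_ne V
  obtain ⟨a, -, b, -, hab⟩ := hconn (A := {x}) (B := {x}ᶜ) ⟨x, by simp⟩ ⟨y, by simpa using hxy.symm⟩
    disjoint_compl_right (by rw [Finset.card_add_card_compl]; omega)
  exact ⟨a, b, hab⟩

lemma isGraphCycle_pair (hadj : G.Adj x y) : IsGraphCycle G ↑[x, y] :=
  ⟨by simpa using hadj.ne, by simp [hadj, hadj.symm]⟩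

/-- The Chvátal–Erdős theorem. -/
theorem isHamiltonian_of_indepSetFree_of_isVertexConnected [Fintype V] [DecidableEq V]
    (hcard : 3 ≤ Fintype.card V) (hindep : G.IndepSetFree k) (hconn : IsVertexConnected G k) :
    G.IsHamiltonian := by
  obtain ⟨c, hc, hmax⟩ := exists_isGraphCycle_forall_length_le G
  have hlonger : ¬ ∃ c', IsGraphCycle G c' ∧ c.length < c'.length := fun ⟨c', hc', hlt⟩ =>
    hlt.not_ge (hmax c' hc')
  refine hc.isHamiltonian (fun v => by_contra fun hv => ?_) hcard
  let T := attachments G {z | z ∈ c} v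
  let next := c.formPerm hc.nodup
  have hnext_notMem : ∀ x ∈ T, next x ∉ T := fun x hx hx' =>
    hlonger (hc.exists_longer_of_hasEar_next hx.1 (hasEar_of_mem_attachments hx hx'))
  have hnext_not_adj : ∀ x ∈ T, ∀ y ∈ T, ¬ G.Adj (next x) (next y) := fun x hx y hy hadj =>
    hlonger (hc.exists_longer_of_hasEar_of_adj_next hx.1 hy.1 (hasEar_of_mem_attachments hx hy)
      hadj)
  have hk : 0 < k := Nat.pos_of_ne_zero fun hk => hindep ∅ (by
    simp [SimpleGraph.isNIndepSet_iff, hk])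
  have hexists : ∃ y ∈ c, y ∉ T := by
    obtain ⟨a, b, hab⟩ := hconn.exists_adj hk (by omega)
    have hlen : 2 ≤ c.length := hmax _ (isGraphCycle_pair hab)
    exact exists_mem_notMem_of_formPerm_notMem hc.nodup (by omega) hnext_notMem
  have hkT : k ≤ (next '' T).ncard := by
    rw [Set.ncard_image_of_injective _ next.injective]
    exact hconn.le_ncard_attachments hv hexists
  obtain ⟨K, hKT, hK⟩ := Set.exists_subset_card_eq hkT
  have hKfin := K.toFinite
  refine hindep hKfin.toFinset ⟨?_, by rw [← Set.ncard_eq_toFinset_card, hK]⟩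
  rw [Set.Finite.coe_toFinset]
  rintro a ha b hb -
  obtain ⟨x, hx, rfl⟩ := hKT ha
  obtain ⟨y, hy, rfl⟩ := hKT hb
  exact hnext_not_adj x hx y hy

end ChvatalErdos

section Packing

variable {V : Type*} {G : SimpleGraph V} {r : ℕ}

lemma ncard_neighborSet_sup_le [Finite V] (D D' : SimpleGraph V) (v : V) :
    ((D ⊔ D').neighborSet v).ncard ≤ (D.neighborSet v).ncard + (D'.neighborSet v).ncard := by
  rw [SimpleGraph.neighborSet_sup]
  exact Set.ncard_union_le _ _

variable [DecidableEq V]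

lemma hasEdgeDisjointHamCycles_succ {a : V} {w : G.Walk a a} (hw : w.IsHamiltonianCycle)
    (h : (G \ w.toSubgraph.spanningCoe).HasEdgeDisjointHamCycles r) :
    G.HasEdgeDisjointHamCycles (r + 1) := by
  obtain ⟨c, hham, hdisj⟩ := h
  have hwc : ∀ i, ∀ e ∈ (c i).2.edges, e ∉ w.edges := by
    intro i e he
    have := (c i).2.edges_subset_edgeSet he
    rw [SimpleGraph.edgeSet_sdiff] at this
    simpa using this.2
  have hle : G \ w.toSubgraph.spanningCoe ≤ G := sdiff_le
  have hedges : ∀ i, ∀ e ∈ ((c i).2.mapLe hle).edges, e ∈ (c i).2.edges := fun i e he => by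
    rwa [SimpleGraph.Walk.edges_mapLe_eq_edges] at he
  refine ⟨Fin.cons ⟨a, w⟩ fun i => ⟨(c i).1, (c i).2.mapLe hle⟩, Fin.cases hw fun i => ?_,
    Fin.cases (Fin.cases (absurd rfl) fun j _ e he he' => ?_) fun i => Fin.cases ?_ fun j hij => ?_⟩
  · exact (hham i).map Function.bijective_id
  · exact hwc j e (hedges j e he') he
  · exact fun _ e he => hwc i e (hedges i e he)
  · intro e he he'
    exact hdisj i j (by simpa using hij) e (hedges i e he) (hedges j e he')

theorem hasEdgeDisjointHamCycles_of_forall_isHamiltonian_sdiff [Fintype V]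
    (hcard : Fintype.card V ≠ 1)
    (h : ∀ D : SimpleGraph V, (∀ v, (D.neighborSet v).ncard ≤ 2 * r) → (G \ D).IsHamiltonian) :
    G.HasEdgeDisjointHamCycles r := by
  induction r generalizing G with
  | zero => exact ⟨Fin.elim0, fun i => i.elim0, fun i => i.elim0⟩
  | succ r ih =>
    have hG : G.IsHamiltonian := by simpa using h ⊥ (by simp)
    obtain ⟨a, w, hw⟩ := hG hcard
    refine hasEdgeDisjointHamCycles_succ hw (ih fun D hD => ?_)
    rw [sdiff_sdiff]
    refine h _ fun v => (ncard_neighborSet_sup_le _ _ v).trans ?_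
    have hwv : (w.toSubgraph.neighborSet v).ncard = 2 :=
      hw.isCycle.ncard_neighborSet_toSubgraph_eq_two (hw.mem_support v)
    have := hD v
    change (w.toSubgraph.neighborSet v).ncard + _ ≤ _
    omega

lemma not_hasEdgeDisjointHamCycles_of_forall_not_adj {v : V} (hr : 1 ≤ r)
    (hv : ∀ u, ¬ G.Adj v u) : ¬ G.HasEdgeDisjointHamCycles r := by
  rintro ⟨c, hham, -⟩
  have hw := hham ⟨0, hr⟩
  have hcard := hw.isCycle.ncard_neighborSet_toSubgraph_eq_two (hw.mem_support v)
  obtain ⟨u, hu⟩ := Set.nonempty_of_ncard_ne_zero (hcard ▸ two_ne_zero)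
  exact hv u hu.adj_sub

end Packing

section EdgeCounts

variable {V : Type*} [DecidableEq V] {G D : SimpleGraph V} {A B K : Finset V} {e : Sym2 V}
  {d k r : ℕ}

/-- The unordered pairs of distinct vertices with one entry in `A` and the other in `B`. -/
def pairsBetween (A B : Finset V) : Finset (Sym2 V) :=
  ((A ×ˢ B).image Sym2.mk.uncurry).filter fun e => ¬ e.IsDiag

/-- The number of edges of `G` with one endpoint in `A` and the other in `B`. An edge inside
`A ∩ B` is counted once. -/
noncomputable def edgesBetween (G : SimpleGraph V) (A B : Finset V) : ℕ :=
  (↑(pairsBetween A B) ∩ G.edgeSet : Set (Sym2 V)).ncard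

lemma not_isDiag_of_mem_pairsBetween (he : e ∈ pairsBetween A B) : ¬ e.IsDiag :=
  (Finset.mem_filter.1 he).2

lemma card_pairsBetween_of_disjoint (h : Disjoint A B) :
    (pairsBetween A B).card = A.card * B.card := by
  rw [pairsBetween, Finset.filter_true_of_mem, Finset.card_image_of_injOn, Finset.card_product]
  · rintro ⟨a, b⟩ hx ⟨a', b'⟩ hy hxy
    simp only [Finset.coe_product, Set.mem_prod, Finset.mem_coe] at hx hy
    rcases Sym2.eq_iff.1 hxy with ⟨rfl, rfl⟩ | ⟨rfl, rfl⟩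
    · rfl
    · exact absurd hy.2 (Finset.disjoint_left.1 h hx.1)
  · simp only [Finset.mem_image, Finset.mem_product, Prod.exists]
    rintro _ ⟨a, b, ⟨ha, hb⟩, rfl⟩ (rfl : a = b)
    exact Finset.disjoint_left.1 h ha hb

lemma card_pairsBetween_self (K : Finset V) : (pairsBetween K K).card = K.card.choose 2 := by
  rw [pairsBetween, Sym2.filter_image_mk_not_isDiag, Sym2.card_image_offDiag]

lemma edgesBetween_le_of_forall_not_adj [Finite V] (hD : ∀ v, (D.neighborSet v).ncard ≤ d)
    (hAB : ∀ a ∈ A, ∀ b ∈ B, ¬ (G \ D).Adj a b) : edgesBetween G A B ≤ d * A.card := by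
  have hsub : (↑(pairsBetween A B) ∩ G.edgeSet : Set (Sym2 V)) ⊆
      ⋃ a ∈ A, (fun b => s(a, b)) '' D.neighborSet a := by
    rintro e ⟨he, heG⟩
    obtain ⟨⟨a, b⟩, hab, rfl⟩ := Finset.mem_image.1 (Finset.mem_filter.1 he).1
    rw [Finset.mem_product] at hab
    refine Set.mem_biUnion hab.1 ⟨b, ?_, rfl⟩
    by_contra hDab
    exact hAB a hab.1 b hab.2 ⟨heG, hDab⟩
  refine (Set.ncard_le_ncard hsub).trans ((Finset.set_ncard_biUnion_le _ _).trans ?_)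
  rw [mul_comm]
  exact Finset.sum_le_card_nsmul _ _ _ fun a _ => (Set.ncard_image_le).trans (hD a)

theorem hasEdgeDisjointHamCycles_of_lt_edgesBetween [Fintype V] (hcard : 3 ≤ Fintype.card V)
    (hset : ∀ K : Finset V, K.card = k → 2 * r * k < edgesBetween G K K)
    (hsep : ∀ A B : Finset V, A.Nonempty → Disjoint A B → A.card ≤ B.card →
      Fintype.card V < A.card + B.card + k → 2 * r * A.card < edgesBetween G A B) :
    G.HasEdgeDisjointHamCycles r := by
  refine hasEdgeDisjointHamCycles_of_forall_isHamiltonian_sdiff (by omega) fun D hD => ?_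
  refine isHamiltonian_of_indepSetFree_of_isVertexConnected (k := k) hcard ?_ ?_
  · intro K hK
    refine (hset K hK.card_eq).not_ge (hK.card_eq ▸ edgesBetween_le_of_forall_not_adj hD ?_)
    exact fun a ha b hb hab => hK.isIndepSet ha hb hab.ne hab
  · intro A B hA hB hdisj hlt
    by_contra! hno
    rcases le_total A.card B.card with hAB | hBA
    · exact (hsep A B hA hdisj hAB hlt).not_ge (edgesBetween_le_of_forall_not_adj hD hno)
    · refine (hsep B A hB hdisj.symm hBA (by omega)).not_ge
        (edgesBetween_le_of_forall_not_adj hD fun b hb a ha hba => hno a ha b hb hba.symm)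

end EdgeCounts

section RandomGraph

open MeasureTheory ProbabilityTheory SimpleGraph
open scoped SimpleGraph unitInterval

variable {V : Type*} {p : I}

lemma setBernoulli_forall_notMem {ι : Type*} {u : Set ι} {E : Finset ι} (hE : ↑E ⊆ u) :
    (setBernoulli u p).real {s | ∀ e ∈ E, e ∉ s} = (1 - p) ^ E.card := by
  have hpreimage : (fun t : ι → Prop => {e | t e}) ⁻¹' {s | ∀ e ∈ E, e ∉ s} =
      Set.pi E fun _ => {False} := by
    ext t
    simp [Set.mem_pi]
  rw [measureReal_def, setBernoulli_apply', hpreimage, Measure.infinitePi_pi _ (by simp),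
    Finset.prod_congr rfl (g := fun _ => (unitInterval.toNNReal (σ p) : ENNReal)) fun e he => ?_]
  · simp
  · have : e ∈ u := hE he
    simp [this]

variable [Finite V]

instance : MeasurableSingletonClass (SimpleGraph V) where
  measurableSet_singleton G := by
    have : {G} = edgeSet ⁻¹' {G.edgeSet} := by
      ext
      simp
    rw [this]
    exact measurableEmbedding_edgeSet.measurable (measurableSet_singleton _)

lemma binomialRandom_forall_notMem_edgeSet {E : Finset (Sym2 V)} (hE : ∀ e ∈ E, ¬ e.IsDiag) :
    G(V, p).real {G | ∀ e ∈ E, e ∉ G.edgeSet} = (1 - p) ^ E.card := by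
  rw [binomialRandom_eq_map, map_measureReal_apply measurable_fromEdgeSet
    (Set.toFinite _).measurableSet, ← setBernoulli_forall_notMem (u := Sym2.diagSetᶜ)
    hE]
  congr 1
  ext s
  simp only [Set.mem_preimage, Set.mem_ofPred_eq, edgeSet_fromEdgeSet, Set.mem_sdiff, not_and]
  refine forall₂_congr fun e he => ?_
  have := hE e he
  simp [this]

lemma erProb_eq_binomialRandom (n : ℕ) (A : SimpleGraph (Fin n) → Prop) :
    erProb n p A = G(Fin n, p).real {G | A G} := by
  classical
  have hsing : ∀ G : SimpleGraph (Fin n), G(Fin n, p).real {G} =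
      (p : ℝ) ^ G.edgeSet.ncard * (1 - p) ^ (n.choose 2 - G.edgeSet.ncard) := by
    intro G
    simp [measureReal_def]
  have hset : {G | A G} = (↑(Finset.univ.filter A) : Set (SimpleGraph (Fin n))) := by simp
  rw [hset, ← sum_measureReal_singleton, Finset.sum_filter, erProb]
  exact Finset.sum_congr rfl fun G _ => by rw [hsing G]

end RandomGraph

section UnionBound

open MeasureTheory SimpleGraph
open scoped SimpleGraph unitInterval

lemma choose_sub_le_pow (m t : ℕ) : m.choose (m - t) ≤ (m + 1) ^ t := by
  rcases le_total t m with htm | hmt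
  · rw [Nat.choose_symm htm]
    exact (Nat.choose_le_pow m t).trans (Nat.pow_le_pow_left m.le_succ t)
  · rw [Nat.sub_eq_zero_of_le hmt, Nat.choose_zero_right]
    exact Nat.one_le_pow _ _ m.succ_pos

variable {V : Type*} [Fintype V] {p : I} {F : Finset (Sym2 V)} {a k r : ℕ}

lemma card_finset_card_le_le_pow (V : Type*) [Fintype V] (k : ℕ) :
    (Finset.univ.filter fun X : Finset V => X.card ≤ k).card ≤ (Fintype.card V + 1) ^ k := by
  classical
  have hsub : (Finset.univ.filter fun X : Finset V => X.card ≤ k) ⊆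
      (Finset.range (k + 1)).biUnion fun i => Finset.univ.powersetCard i := by
    intro X hX
    simpa [Nat.lt_succ_iff] using hX
  refine (Finset.card_le_card hsub).trans (Finset.card_biUnion_le.trans ?_)
  rw [add_pow]
  refine Finset.sum_le_sum fun i hi => ?_
  rw [Finset.card_powersetCard, one_pow, mul_one, Finset.card_univ]
  refine (Nat.choose_le_pow _ _).trans (Nat.le_mul_of_pos_right _ (Nat.choose_pos ?_))
  exact Nat.lt_succ_iff.1 (Finset.mem_range.1 hi)

lemma card_add_one_le_of_forall_not_isDiag (hF : ∀ e ∈ F, ¬ e.IsDiag) :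
    F.card + 1 ≤ (Fintype.card V + 1) ^ 2 := by
  classical
  have hsub : F ⊆ (⊤ : SimpleGraph V).edgeFinset := fun e he => by simpa using hF e he
  have h1 := (Finset.card_le_card hsub).trans_eq card_edgeFinset_top_eq_card_choose_two
  have h2 := Nat.choose_le_pow (Fintype.card V) 2
  rw [add_sq]
  omega

lemma binomialRandom_ncard_inter_edgeSet_le (hF : ∀ e ∈ F, ¬ e.IsDiag) (t : ℕ) :
    G(V, p).real {G | (↑F ∩ G.edgeSet : Set (Sym2 V)).ncard ≤ t} ≤
      ((Fintype.card V : ℝ) + 1) ^ (2 * t) * (1 - p) ^ (F.card - t) := by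
  have hsub : {G : SimpleGraph V | (↑F ∩ G.edgeSet : Set (Sym2 V)).ncard ≤ t} ⊆
      ⋃ X ∈ F.powersetCard (F.card - t), {G | ∀ e ∈ X, e ∉ G.edgeSet} := by
    classical
    intro G hG
    have hcard : F.card - t ≤ (F.filter fun e => e ∉ G.edgeSet).card := by
      have h1 := F.card_filter_add_card_filter_not (· ∈ G.edgeSet)
      have h2 : (↑F ∩ G.edgeSet : Set (Sym2 V)).ncard = (F.filter (· ∈ G.edgeSet)).card := by
        rw [← Set.ncard_coe_finset, Finset.coe_filter]
        rfl
      rw [Set.mem_ofPred_eq] at hG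
      omega
    obtain ⟨X, hXF, hX⟩ := Finset.exists_subset_card_eq hcard
    exact Set.mem_biUnion (Finset.mem_powersetCard.2 ⟨hXF.trans (Finset.filter_subset _ _), hX⟩)
      fun e he => (Finset.mem_filter.1 (hXF he)).2
  have hchoose : (F.card.choose (F.card - t) : ℝ) ≤ ((Fintype.card V : ℝ) + 1) ^ (2 * t) := by
    rw [pow_mul]
    exact_mod_cast (choose_sub_le_pow _ _).trans
      (Nat.pow_le_pow_left (card_add_one_le_of_forall_not_isDiag hF) t)
  have hq : 0 ≤ 1 - (p : ℝ) := unitInterval.one_minus_nonneg p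
  refine (measureReal_mono hsub (measure_ne_top _ _)).trans
    ((measureReal_biUnion_finset_le _ _).trans ?_)
  refine (Finset.sum_le_card_nsmul _ _ ((1 - (p : ℝ)) ^ (F.card - t)) fun X hX => ?_).trans ?_
  · obtain ⟨hXF, hX⟩ := Finset.mem_powersetCard.1 hX
    rw [binomialRandom_forall_notMem_edgeSet fun e he => hF e (hXF he), hX]
  · rw [Finset.card_powersetCard, nsmul_eq_mul]
    gcongr

lemma binomialRandom_exists_ncard_inter_edgeSet_le {ι : Type*} (s : Finset ι)
    {F : ι → Finset (Sym2 V)} {m : ℕ} (hF : ∀ i ∈ s, ∀ e ∈ F i, ¬ e.IsDiag)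
    (hm : ∀ i ∈ s, m ≤ (F i).card) (t : ℕ) :
    G(V, p).real {G | ∃ i ∈ s, (↑(F i) ∩ G.edgeSet : Set (Sym2 V)).ncard ≤ t} ≤
      s.card * (((Fintype.card V : ℝ) + 1) ^ (2 * t) * (1 - p) ^ (m - t)) := by
  have hunion : {G : SimpleGraph V | ∃ i ∈ s, (↑(F i) ∩ G.edgeSet : Set (Sym2 V)).ncard ≤ t} =
      ⋃ i ∈ s, {G | (↑(F i) ∩ G.edgeSet : Set (Sym2 V)).ncard ≤ t} := by
    ext
    simp
  rw [hunion, ← nsmul_eq_mul]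
  refine (measureReal_biUnion_finset_le _ _).trans (Finset.sum_le_card_nsmul _ _ _ fun i hi => ?_)
  refine (binomialRandom_ncard_inter_edgeSet_le (hF i hi) t).trans ?_
  gcongr ?_ * ?_
  exact pow_le_pow_of_le_one (unitInterval.one_minus_nonneg p) (unitInterval.one_minus_le_one p)
    (Nat.sub_le_sub_right (hm i hi) t)

variable [DecidableEq V]

lemma binomialRandom_exists_edgesBetween_self_le (k t : ℕ) :
    G(V, p).real {G | ∃ K : Finset V, K.card = k ∧ edgesBetween G K K ≤ t} ≤
      ((Fintype.card V : ℝ) + 1) ^ (k + 2 * t) * (1 - p) ^ (k.choose 2 - t) := by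
  have hbound := binomialRandom_exists_ncard_inter_edgeSet_le (p := p)
    (Finset.univ.powersetCard k : Finset (Finset V)) (F := fun K => pairsBetween K K)
    (m := k.choose 2) (fun K _ e => not_isDiag_of_mem_pairsBetween)
    (fun K hK => by rw [card_pairsBetween_self, (Finset.mem_powersetCard.1 hK).2]) t
  simp only [Finset.mem_powersetCard, Finset.subset_univ, true_and, Finset.card_powersetCard,
    Finset.card_univ] at hbound
  have hchoose : ((Fintype.card V).choose k : ℝ) ≤ ((Fintype.card V : ℝ) + 1) ^ k := by
    exact_mod_cast (Nat.choose_le_pow _ _).trans (Nat.pow_le_pow_left (Nat.le_succ _) k)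
  have hq : 0 ≤ 1 - (p : ℝ) := unitInterval.one_minus_nonneg p
  refine hbound.trans ?_
  rw [pow_add, mul_assoc]
  gcongr

/-- The pairs `(A, C)` for which `A` and the complement of `A ∪ C` may be the two sides of a
separation by at most `k` vertices, with the smaller side `A` of size `a`. -/
def separationIndices (V : Type*) [Fintype V] [DecidableEq V] (a k : ℕ) :
    Finset (Finset V × Finset V) :=
  {x | x.1.card = a ∧ x.2.card ≤ k ∧ a ≤ ((x.1 ∪ x.2)ᶜ).card}

lemma card_separationIndices_le (a k : ℕ) :
    (separationIndices V a k).card ≤ (Fintype.card V + 1) ^ (a + k) := by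
  have hsub : separationIndices V a k ⊆
      Finset.univ.powersetCard a ×ˢ Finset.univ.filter fun C : Finset V => C.card ≤ k := by
    intro x hx
    obtain ⟨hA, hC, -⟩ := (Finset.mem_filter_univ x).1 hx
    simp [hA, hC]
  have hpow : (Fintype.card V).choose a ≤ (Fintype.card V + 1) ^ a :=
    (Nat.choose_le_pow _ _).trans (Nat.pow_le_pow_left (Nat.le_succ _) a)
  refine (Finset.card_le_card hsub).trans ?_
  rw [Finset.card_product, Finset.card_powersetCard, Finset.card_univ, pow_add]
  exact Nat.mul_le_mul hpow (card_finset_card_le_le_pow V k)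

lemma le_card_pairsBetween_of_mem_separationIndices {x : Finset V × Finset V}
    (hx : x ∈ separationIndices V a k) :
    a * max a (Fintype.card V - k - a) ≤ (pairsBetween x.1 (x.1 ∪ x.2)ᶜ).card := by
  obtain ⟨hA, hC, hle⟩ := (Finset.mem_filter_univ x).1 hx
  have hcompl := Finset.card_add_card_compl (x.1 ∪ x.2)
  have hunion := Finset.card_union_le x.1 x.2
  rw [card_pairsBetween_of_disjoint (disjoint_compl_right.mono_left Finset.subset_union_left), hA]
  exact Nat.mul_le_mul_left _ (max_le hle (by omega))

lemma mk_compl_mem_separationIndices {A B : Finset V} (hAB : Disjoint A B)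
    (hle : A.card ≤ B.card) (hlt : Fintype.card V < A.card + B.card + k) :
    (A, (A ∪ B)ᶜ) ∈ separationIndices V A.card k ∧ (A ∪ (A ∪ B)ᶜ)ᶜ = B := by
  have hB : (A ∪ (A ∪ B)ᶜ)ᶜ = B := by
    rw [Finset.compl_union, compl_compl, Finset.inter_union_distrib_left, Finset.inter_comm,
      Finset.inter_compl, Finset.empty_union, Finset.inter_comm, Finset.inter_eq_left]
    exact fun b hb => Finset.mem_compl.2 (Finset.disjoint_right.1 hAB hb)
  have hcompl := Finset.card_add_card_compl (A ∪ B)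
  rw [Finset.card_union_of_disjoint hAB] at hcompl
  exact ⟨(Finset.mem_filter_univ _).2 ⟨rfl, by dsimp only; omega, hB.symm ▸ hle⟩, hB⟩

lemma binomialRandom_exists_edgesBetween_le (a k t : ℕ) :
    G(V, p).real {G | ∃ A B : Finset V, A.card = a ∧ Disjoint A B ∧ a ≤ B.card ∧
      Fintype.card V < a + B.card + k ∧ edgesBetween G A B ≤ t} ≤
      ((Fintype.card V : ℝ) + 1) ^ (a + k + 2 * t) *
        (1 - p) ^ (a * max a (Fintype.card V - k - a) - t) := by
  have hsub : {G : SimpleGraph V | ∃ A B : Finset V, A.card = a ∧ Disjoint A B ∧ a ≤ B.card ∧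
      Fintype.card V < a + B.card + k ∧ edgesBetween G A B ≤ t} ⊆
      {G | ∃ x ∈ separationIndices V a k, edgesBetween G x.1 (x.1 ∪ x.2)ᶜ ≤ t} := by
    rintro G ⟨A, B, rfl, hAB, hle, hlt, hG⟩
    obtain ⟨hmem, hB⟩ := mk_compl_mem_separationIndices hAB hle hlt
    exact ⟨(A, (A ∪ B)ᶜ), hmem, by rwa [hB]⟩
  have hbound := binomialRandom_exists_ncard_inter_edgeSet_le (p := p) (separationIndices V a k)
    (fun x _ e => not_isDiag_of_mem_pairsBetween)
    (fun x hx => le_card_pairsBetween_of_mem_separationIndices hx) t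
  have hcard : ((separationIndices V a k).card : ℝ) ≤ ((Fintype.card V : ℝ) + 1) ^ (a + k) := by
    exact_mod_cast card_separationIndices_le a k
  have hq : 0 ≤ 1 - (p : ℝ) := unitInterval.one_minus_nonneg p
  refine (measureReal_mono hsub).trans (hbound.trans ?_)
  rw [pow_add, mul_assoc]
  gcongr

theorem binomialRandom_not_hasEdgeDisjointHamCycles_le (hcard : 3 ≤ Fintype.card V) (k r : ℕ) :
    G(V, p).real {G | ¬ G.HasEdgeDisjointHamCycles r} ≤
      ((Fintype.card V : ℝ) + 1) ^ (k + 4 * r * k) * (1 - p) ^ (k.choose 2 - 2 * r * k) +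
      ∑ a ∈ Finset.Icc 1 (Fintype.card V), ((Fintype.card V : ℝ) + 1) ^ (a + k + 4 * r * a) *
        (1 - p) ^ (a * max a (Fintype.card V - k - a) - 2 * r * a) := by
  have hsub : {G : SimpleGraph V | ¬ G.HasEdgeDisjointHamCycles r} ⊆
      {G | ∃ K : Finset V, K.card = k ∧ edgesBetween G K K ≤ 2 * r * k} ∪
      ⋃ a ∈ Finset.Icc 1 (Fintype.card V), {G | ∃ A B : Finset V, A.card = a ∧ Disjoint A B ∧
        a ≤ B.card ∧ Fintype.card V < a + B.card + k ∧ edgesBetween G A B ≤ 2 * r * a} := by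
    intro G hG
    contrapose! hG
    simp only [Set.mem_union, Set.mem_ofPred_eq, Set.mem_iUnion, not_or, not_exists, not_and,
      not_le] at hG
    rw [Set.mem_ofPred_eq, not_not]
    refine hasEdgeDisjointHamCycles_of_lt_edgesBetween hcard hG.1 fun A B hA hAB hle hlt => ?_
    exact hG.2 A.card (Finset.mem_Icc.2 ⟨hA.card_pos, Finset.card_le_univ A⟩) A B rfl hAB hle hlt
  refine (measureReal_mono hsub).trans ((measureReal_union_le _ _).trans (add_le_add ?_ ?_))
  · refine (binomialRandom_exists_edgesBetween_self_le k (2 * r * k)).trans_eq ?_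
    ring_nf
  · refine (measureReal_biUnion_finset_le _ _).trans (Finset.sum_le_sum fun a _ => ?_)
    refine (binomialRandom_exists_edgesBetween_le a k (2 * r * a)).trans_eq ?_
    ring_nf

lemma pow_le_binomialRandom_not_hasEdgeDisjointHamCycles [Nonempty V] (hr : 1 ≤ r) :
    (1 - (p : ℝ)) ^ Fintype.card V ≤ G(V, p).real {G | ¬ G.HasEdgeDisjointHamCycles r} := by
  obtain ⟨v⟩ := ‹Nonempty V›
  let E : Finset (Sym2 V) := (Finset.univ.erase v).image fun u => s(v, u)
  have hE : ∀ e ∈ E, ¬ e.IsDiag := by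
    intro e he
    obtain ⟨u, hu, rfl⟩ := Finset.mem_image.1 he
    simpa using (Finset.ne_of_mem_erase hu).symm
  have hcard : E.card ≤ Fintype.card V := Finset.card_image_le.trans (Finset.card_le_univ _)
  calc (1 - (p : ℝ)) ^ Fintype.card V ≤ (1 - (p : ℝ)) ^ E.card :=
        pow_le_pow_of_le_one (unitInterval.one_minus_nonneg p) (unitInterval.one_minus_le_one p)
          hcard
    _ = G(V, p).real {G | ∀ e ∈ E, e ∉ G.edgeSet} :=
        (binomialRandom_forall_notMem_edgeSet hE).symm
    _ ≤ _ := by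
        refine measureReal_mono fun G hG => ?_
        refine not_hasEdgeDisjointHamCycles_of_forall_not_adj (v := v) hr fun u hu => ?_
        exact hG s(v, u) (Finset.mem_image.2 ⟨u, by simpa using hu.ne', rfl⟩) hu

end UnionBound

section Asymptotics

open Filter Topology

lemma le_neg_log_one_sub {x : ℝ} (hx : x < 1) : x ≤ -Real.log (1 - x) := by
  have := Real.log_le_sub_one_of_pos (sub_pos.2 hx)
  linarith

lemma log_add_one_le_two_mul_log {x : ℝ} (hx : 2 ≤ x) : Real.log (x + 1) ≤ 2 * Real.log x := by
  rw [two_mul, ← Real.log_mul (by positivity) (by positivity)]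
  refine Real.log_le_log (by positivity) ?_
  nlinarith

lemma pow_mul_pow_sub_le_exp {b q : ℝ} (hb : 0 < b) (hq0 : 0 < q) (hq1 : q ≤ 1) (i m t : ℕ) :
    b ^ i * q ^ (m - t) ≤ Real.exp (i * Real.log b - ((m : ℝ) - t) * -Real.log q) := by
  have hlog : Real.log q ≤ 0 := Real.log_nonpos hq0.le hq1
  have hsub : (m : ℝ) - t ≤ ((m - t : ℕ) : ℝ) := by
    rw [sub_le_iff_le_add]
    exact_mod_cast le_tsub_add
  calc b ^ i * q ^ (m - t)
      = Real.exp (i * Real.log b + ((m - t : ℕ) : ℝ) * Real.log q) := by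
        rw [Real.exp_add, Real.exp_nat_mul, Real.exp_nat_mul, Real.exp_log hb, Real.exp_log hq0]
    _ ≤ _ := by
        rw [Real.exp_le_exp, mul_neg, sub_neg_eq_add]
        exact add_le_add_right (mul_le_mul_of_nonpos_right hsub hlog) _

/-- The range of parameters in which `p` exceeds `r log n / √n` by a factor of at least `1 / η`.
The bound on `log n` only excludes finitely many `n`. -/
structure IsDenseRegime (n r : ℕ) (p η : ℝ) : Prop where
  pos : 0 < p
  lt_one : p < 1
  one_le_count : 1 ≤ r
  one_le_log : 1 ≤ Real.log n
  mul_log_le : r * Real.log n ≤ η * (p * √n)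

namespace IsDenseRegime

variable {n r a k : ℕ} {p η : ℝ}

lemma one_le_cast_count (h : IsDenseRegime n r p η) : (1 : ℝ) ≤ r := by
  exact_mod_cast h.one_le_count

lemma natCast_pos (h : IsDenseRegime n r p η) : (0 : ℝ) < n := by
  refine Nat.cast_pos.2 (Nat.pos_of_ne_zero ?_)
  rintro rfl
  have := h.one_le_log
  norm_num at this

lemma neg_log_pos (h : IsDenseRegime n r p η) : 0 < -Real.log (1 - p) :=
  h.pos.trans_le (le_neg_log_one_sub h.lt_one)

lemma nonneg (h : IsDenseRegime n r p η) : 0 ≤ η := by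
  have hpos : 0 < p * √n := mul_pos h.pos (Real.sqrt_pos.2 h.natCast_pos)
  have hlog : 0 ≤ r * Real.log n := mul_nonneg (Nat.cast_nonneg r) (zero_le_one.trans h.one_le_log)
  exact nonneg_of_mul_nonneg_left (hlog.trans h.mul_log_le) hpos

lemma mul_log_mul_sqrt_le (h : IsDenseRegime n r p η) :
    r * Real.log n * √n ≤ η * (n * -Real.log (1 - p)) := by
  have hη := h.nonneg
  calc r * Real.log n * √n ≤ η * (p * √n) * √n :=
        mul_le_mul_of_nonneg_right h.mul_log_le (Real.sqrt_nonneg _)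
    _ = η * (n * p) := by
        rw [mul_assoc, mul_assoc, Real.mul_self_sqrt (Nat.cast_nonneg n), mul_comm p]
    _ ≤ η * (n * -Real.log (1 - p)) := by gcongr; exact le_neg_log_one_sub h.lt_one

lemma count_le (h : IsDenseRegime n r p η) : r ≤ η * √n := by
  have hη := h.nonneg
  calc (r : ℝ) ≤ r * Real.log n := le_mul_of_one_le_right (Nat.cast_nonneg r) h.one_le_log
    _ ≤ η * (p * √n) := h.mul_log_le
    _ ≤ η * √n := by gcongr; exact mul_le_of_le_one_left (Real.sqrt_nonneg _) h.lt_one.le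

lemma count_mul_sqrt_le (h : IsDenseRegime n r p η) : r * √n ≤ η * n := by
  calc r * √n ≤ η * √n * √n := by gcongr; exact h.count_le
    _ = η * n := by rw [mul_assoc, Real.mul_self_sqrt (Nat.cast_nonneg n)]

lemma sqrt_le (h : IsDenseRegime n r p η) : √n ≤ η * n :=
  (le_mul_of_one_le_left (Real.sqrt_nonneg _) h.one_le_cast_count).trans h.count_mul_sqrt_le

lemma le_sqrt (h : IsDenseRegime n r p η) (hη : η ≤ 1 / 200) : 200 ≤ √n := by
  have hone := h.one_le_cast_count.trans h.count_le
  have : η * √n ≤ 1 / 200 * √n := by gcongr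
  linarith

lemma sqrt_le_natCast (h : IsDenseRegime n r p η) (hη : η ≤ 1 / 200) : √n ≤ n := by
  have := h.natCast_pos
  nlinarith [h.sqrt_le]

lemma log_add_one_le (h : IsDenseRegime n r p η) (hη : η ≤ 1 / 200) :
    Real.log (n + 1) ≤ 2 * Real.log n :=
  log_add_one_le_two_mul_log (by linarith [h.le_sqrt hη, h.sqrt_le_natCast hη])

/-- The terms of the union bound have this shape: `i` accounts for the choices made, while at least
`m - t` edges are missing. -/
lemma pow_mul_pow_le_exp (h : IsDenseRegime n r p η) (hη : η ≤ 1 / 200) {i m t : ℕ} {c y : ℝ}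
    (hc : 0 ≤ c) (hi : (i : ℝ) ≤ c * (r * √n)) (hy : y ≤ (m : ℝ) - t)
    (hcy : (1 - 30 * η) * n ≤ y - 2 * c * (η * n)) :
    ((n : ℝ) + 1) ^ i * (1 - p) ^ (m - t) ≤
      Real.exp (-((1 - 30 * η) * (n * -Real.log (1 - p)))) := by
  have hL := h.neg_log_pos
  refine (pow_mul_pow_sub_le_exp (by positivity) (sub_pos.2 h.lt_one) (by linarith [h.pos])
    i m t).trans (Real.exp_le_exp.2 ?_)
  have hentropy : i * Real.log (n + 1) ≤ 2 * c * (η * (n * -Real.log (1 - p))) :=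
    calc i * Real.log (n + 1) ≤ c * (r * √n) * (2 * Real.log n) := by
          gcongr
          · exact Real.log_nonneg (by linarith [h.natCast_pos])
          · exact h.log_add_one_le hη
      _ = 2 * c * (r * Real.log n * √n) := by ring
      _ ≤ 2 * c * (η * (n * -Real.log (1 - p))) :=
          mul_le_mul_of_nonneg_left h.mul_log_mul_sqrt_le (by positivity)
  have hmissing := mul_le_mul_of_nonneg_right hy hL.le
  have hmain := mul_le_mul_of_nonneg_right hcy hL.le
  linarith

lemma sparse_set_term_le (h : IsDenseRegime n r p η) (hη : η ≤ 1 / 200) (hk : 2 * √n ≤ k)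
    (hk' : k ≤ 3 * √n) :
    ((n : ℝ) + 1) ^ (k + 4 * r * k) * (1 - p) ^ (k.choose 2 - 2 * r * k) ≤
      Real.exp (-((1 - 30 * η) * (n * -Real.log (1 - p)))) := by
  have hr := h.one_le_cast_count
  have hrk : (r : ℝ) * k ≤ 3 * (r * √n) :=
    (mul_le_mul_of_nonneg_left hk' (Nat.cast_nonneg r)).trans_eq (by ring)
  have hkrk : (k : ℝ) ≤ r * k := le_mul_of_one_le_left (Nat.cast_nonneg k) hr
  refine h.pow_mul_pow_le_exp hη (c := 15) (y := n) (by norm_num) ?_ ?_ (by linarith)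
  · push_cast
    linarith
  · have hchoose : 2 * (n : ℝ) - √n ≤ (k.choose 2 : ℕ) := by
      have hs := Real.mul_self_sqrt (Nat.cast_nonneg (α := ℝ) n)
      rw [Nat.cast_choose_two]
      nlinarith [h.le_sqrt hη]
    have hηn : η * n ≤ 1 / 200 * n := by gcongr
    push_cast
    linarith [h.count_mul_sqrt_le, h.sqrt_le]

lemma le_mul_sub_of_separation (h : IsDenseRegime n r p η) (hη : η ≤ 1 / 200) {b : ℕ}
    (ha : 1 ≤ a) (hab : a ≤ b) (hb : n ≤ a + b + k) (hk : k ≤ 3 * √n) :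
    (1 - 30 * η) * n ≤ a * (b - 18 * (η * n)) := by
  have hab' : (a : ℝ) ≤ b := by exact_mod_cast hab
  have hb' : (n : ℝ) ≤ a + b + k := by exact_mod_cast hb
  have hηn : η * n ≤ 1 / 200 * n := by gcongr
  have hs := h.sqrt_le
  have hs200 := h.le_sqrt hη
  rcases le_or_gt a 2 with ha2 | ha2
  · have ha1 : (1 : ℝ) ≤ a := by exact_mod_cast ha
    have ha2 : (a : ℝ) ≤ 2 := by exact_mod_cast ha2
    calc (1 - 30 * η) * n ≤ b - 18 * (η * n) := by linarith
      _ ≤ a * (b - 18 * (η * n)) := le_mul_of_one_le_left (by linarith) ha1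
  · have ha3 : (3 : ℝ) ≤ a := by exact_mod_cast ha2
    calc (1 - 30 * η) * n ≤ 3 * (n / 3) := by linarith
      _ ≤ a * (b - 18 * (η * n)) := by gcongr; linarith

lemma sparse_separation_term_le (h : IsDenseRegime n r p η) (hη : η ≤ 1 / 200) (ha : 1 ≤ a)
    (hk : k ≤ 3 * √n) :
    ((n : ℝ) + 1) ^ (a + k + 4 * r * a) * (1 - p) ^ (a * max a (n - k - a) - 2 * r * a) ≤
      Real.exp (-((1 - 30 * η) * (n * -Real.log (1 - p)))) := by
  have hr := h.one_le_cast_count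
  have hs200 := h.le_sqrt hη
  have ha1 : (1 : ℝ) ≤ a := by exact_mod_cast ha
  have hsep := h.le_mul_sub_of_separation hη ha (le_max_left a (n - k - a)) (k := k) (by omega) hk
  refine h.pow_mul_pow_le_exp hη (c := 8 * a) (y := a * ((max a (n - k - a) : ℕ) - 2 * (η * n)))
    (by positivity) ?_ ?_ (by linarith)
  · have hars : (a : ℝ) * r ≤ a * (r * √n) := by
      gcongr
      exact le_mul_of_one_le_right (by positivity) (by linarith)
    have haar : (a : ℝ) ≤ a * r := le_mul_of_one_le_right (by positivity) hr
    have hsars : √n ≤ a * (r * √n) := by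
      rw [← mul_assoc]
      exact le_mul_of_one_le_left (Real.sqrt_nonneg _) (one_le_mul_of_one_le_of_one_le ha1 hr)
    push_cast
    linarith
  · have hrn : (r : ℝ) ≤ η * n :=
      (le_mul_of_one_le_right (Nat.cast_nonneg r) (by linarith)).trans h.count_mul_sqrt_le
    have : (a : ℝ) * r ≤ a * (η * n) := by gcongr
    push_cast
    linarith

lemma add_one_le_exp (h : IsDenseRegime n r p η) (hη : η ≤ 1 / 200) :
    (n : ℝ) + 1 ≤ Real.exp (2 * η * (n * -Real.log (1 - p))) := by
  rw [← Real.log_le_iff_le_exp (by positivity)]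
  have hlog : 0 ≤ Real.log n := zero_le_one.trans h.one_le_log
  have hle : Real.log n ≤ r * Real.log n * √n := by
    rw [mul_right_comm]
    refine le_mul_of_one_le_left hlog (one_le_mul_of_one_le_of_one_le h.one_le_cast_count ?_)
    linarith [h.le_sqrt hη]
  linarith [h.log_add_one_le hη, h.mul_log_mul_sqrt_le]

theorem erProb_not_hasEdgeDisjointHamCycles_le (h : IsDenseRegime n r p η) (hη : η ≤ 1 / 200) :
    erProb n p (fun G => ¬ G.HasEdgeDisjointHamCycles r) ≤
      Real.exp (-((1 - 32 * η) * (n * -Real.log (1 - p)))) := by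
  have hn : 3 ≤ Fintype.card (Fin n) := by
    have : (3 : ℝ) ≤ n := by linarith [h.le_sqrt hη, h.sqrt_le_natCast hη]
    rw [Fintype.card_fin]
    exact_mod_cast this
  have hk : (⌈2 * √n⌉₊ : ℝ) ≤ 3 * √n := by
    have := Nat.ceil_lt_add_one (show 0 ≤ 2 * √n by positivity)
    linarith [h.le_sqrt hη]
  have hunion := binomialRandom_not_hasEdgeDisjointHamCycles_le (p := ⟨p, h.pos.le, h.lt_one.le⟩)
    hn ⌈2 * √n⌉₊ r
  rw [← erProb_eq_binomialRandom, Fintype.card_fin] at hunion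
  have hset := h.sparse_set_term_le hη (Nat.le_ceil _) hk
  have hseps := Finset.sum_le_card_nsmul (Finset.Icc 1 n) _ _ fun a ha =>
    h.sparse_separation_term_le hη (Finset.mem_Icc.1 ha).1 hk
  rw [Nat.card_Icc, Nat.add_sub_cancel, nsmul_eq_mul] at hseps
  calc _ ≤ ((n : ℝ) + 1) * Real.exp (-((1 - 30 * η) * (n * -Real.log (1 - p)))) := by
        rw [add_one_mul, add_comm]
        exact hunion.trans (add_le_add hset hseps)
    _ ≤ Real.exp (2 * η * (n * -Real.log (1 - p))) *
        Real.exp (-((1 - 30 * η) * (n * -Real.log (1 - p)))) := by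
        gcongr
        exact h.add_one_le_exp hη
    _ = _ := by
        rw [← Real.exp_add]
        ring_nf

lemma pow_le_erProb_not_hasEdgeDisjointHamCycles (h : IsDenseRegime n r p η) :
    (1 - p) ^ n ≤ erProb n p (fun G => ¬ G.HasEdgeDisjointHamCycles r) := by
  have : Nonempty (Fin n) := ⟨0, Nat.cast_pos.1 h.natCast_pos⟩
  have hle := pow_le_binomialRandom_not_hasEdgeDisjointHamCycles (V := Fin n)
    (p := ⟨p, h.pos.le, h.lt_one.le⟩) h.one_le_count
  rwa [← erProb_eq_binomialRandom, Fintype.card_fin] at hle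

lemma log_erProb_div_mem_Icc (h : IsDenseRegime n r p η) (hη : η ≤ 1 / 200) :
    Real.log (erProb n p (fun G => ¬ G.HasEdgeDisjointHamCycles r)) / (n * Real.log (1 - p)) ∈
      Set.Icc (1 - 32 * η) 1 := by
  have hden : n * Real.log (1 - p) < 0 :=
    mul_neg_of_pos_of_neg h.natCast_pos (neg_pos.1 h.neg_log_pos)
  have hpow : 0 < (1 - p) ^ n := pow_pos (sub_pos.2 h.lt_one) n
  have hlower := h.pow_le_erProb_not_hasEdgeDisjointHamCycles
  have hupper := (Real.log_le_iff_le_exp (hpow.trans_le hlower)).2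
    (h.erProb_not_hasEdgeDisjointHamCycles_le hη)
  refine ⟨(le_div_iff_of_neg hden).2 (hupper.trans_eq (by ring)), (div_le_one_of_neg hden).2 ?_⟩
  rw [← Real.log_pow]
  exact Real.log_le_log hpow hlower

end IsDenseRegime

lemma eventually_isDenseRegime {p : ℕ → ℝ} {r : ℕ → ℕ} {η : ℝ} (hη : 0 < η)
    (hp : ∀ᶠ n in atTop, p n < 1)
    (hlim : Tendsto (fun n : ℕ => p n * √n / (r n * Real.log n)) atTop atTop) :
    ∀ᶠ n in atTop, IsDenseRegime n (r n) (p n) η := by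
  have hlog : ∀ᶠ n : ℕ in atTop, 1 ≤ Real.log n :=
    (Real.tendsto_log_atTop.comp tendsto_natCast_atTop_atTop).eventually_ge_atTop 1
  filter_upwards [hp, hlim.eventually_ge_atTop η⁻¹, hlog] with n hp hge hlog
  have hratio := (inv_pos.2 hη).trans_le hge
  have hr : 1 ≤ r n := by
    rw [Nat.one_le_iff_ne_zero]
    intro hr
    simp [hr] at hratio
  have hrpos : (0 : ℝ) < r n := by exact_mod_cast hr
  have hden : 0 < r n * Real.log n := by positivity
  refine ⟨pos_of_mul_pos_left ((div_pos_iff_of_pos_right hden).1 hratio) (Real.sqrt_nonneg _), hp,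
    hr, hlog, ?_⟩
  rwa [le_div_iff₀ hden, inv_mul_le_iff₀ hη] at hge

theorem random_edge_disjoint_ham_cycles_failure_probability_asymptotics_general
    (p : ℕ → ℝ) (r : ℕ → ℕ) (hp : ∀ᶠ n in atTop, p n < 1)
    (hlim : Tendsto (fun n : ℕ => p n * √n / (r n * Real.log n)) atTop atTop) :
    Tendsto
      (fun n : ℕ =>
        Real.log (erProb n (p n) (fun G => ¬ G.HasEdgeDisjointHamCycles (r n))) /
          (n * Real.log (1 - p n)))
      atTop (𝓝 1) := by
  refine Metric.tendsto_nhds.2 fun δ hδ => ?_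
  have hη : 0 < min (1 / 200) (δ / 33) := by positivity
  filter_upwards [eventually_isDenseRegime hη hp hlim] with n h
  have hmem := h.log_erProb_div_mem_Icc (min_le_left _ _)
  have hle := min_le_right (1 / 200) (δ / 33)
  rw [Real.dist_eq, abs_lt]
  constructor <;> linarith [hmem.1, hmem.2]

end Asymptotics

theorem random_edge_disjoint_ham_cycles_failure_probability_asymptotics
    (ε : ℝ) (hε0 : 0 < ε) (hε1 : ε < 1)
    (p : ℕ → ℝ) (hp0 : ∀ n, 0 ≤ p n) (hp1 : ∀ n, p n ≤ 1 - ε)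
    (r : ℕ → ℕ) (hr : ∀ n, 1 ≤ r n)
    (hlim : Filter.Tendsto (fun n : ℕ => p n * Real.sqrt n / (r n * Real.log n))
      Filter.atTop Filter.atTop) :
    Filter.Tendsto
      (fun n : ℕ =>
        Real.log (erProb n (p n) (fun G => ¬ G.HasEdgeDisjointHamCycles (r n))) /
          (n * Real.log (1 - p n)))
      Filter.atTop (nhds 1) :=
  random_edge_disjoint_ham_cycles_failure_probability_asymptotics_general p r
    (.of_forall fun n => (hp1 n).trans_lt (sub_lt_self 1 hε0)) hlim
end

section
/- Let n and d be integers with 1 ≤ d ≤ n, and let p ∈ [0,1]. Then the Erdős–Rényi probability that a graph drawn from G(n,p) has minimum degree less than d is at most n · C(n−1, d−1) · (1−p)^{n−d}, where C(m,k) denotes a binomial coefficient. -/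
/-- The minimum degree of a graph on `Fin n`. -/
noncomputable def minDeg {n : ℕ} (G : SimpleGraph (Fin n)) : ℕ :=
  ⨅ v : Fin n, (G.neighborSet v).ncard

/-!
A vertex of degree less than `d` on `N` vertices is non-adjacent to every vertex of some set `S` of
`N - d` other vertices. For fixed `v` and `S` the `N - d` pairs joining `v` to `S` are absent
independently, so this has probability `(1 - p) ^ (N - d)`. A union bound over the
`(N - 1).choose (N - d) = (N - 1).choose (d - 1)` sets `S`, and then over the `N` vertices `v`,
gives the estimate.
-/

open MeasureTheory ProbabilityTheory
open scoped Finset SimpleGraph unitInterval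

section RandomGraph

variable {ι V : Type*}

lemma setBernoulli_real_disjoint (p : I) {u : Set ι} {F : Finset ι} (hF : ↑F ⊆ u) :
    setBer(u, p).real {s | Disjoint s ↑F} = (1 - p : ℝ) ^ #F := by
  have hpi : (fun (q : ι → Prop) ↦ {i | q i}) ⁻¹' {s | Disjoint s ↑F} =
      Set.pi ↑F fun _ ↦ {False} := by
    ext q
    simp [Set.disjoint_right]
  have hfactor (i) (hi : i ∈ F) :
      (unitInterval.toNNReal p • Measure.dirac (i ∈ u) +
        unitInterval.toNNReal (σ p) • Measure.dirac False : Measure Prop) {False} =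
      unitInterval.toNNReal (σ p) := by
    have hiu : i ∈ u := hF hi
    simp [hiu, Measure.dirac_apply']
  rw [measureReal_def, setBernoulli_apply', hpi, Measure.infinitePi_pi _ (by simp),
    Finset.prod_congr rfl hfactor]
  simp

instance [Countable V] : MeasurableSingletonClass (SimpleGraph V) where
  measurableSet_singleton G := by
    rw [← SimpleGraph.measurableEmbedding_edgeSet.measurableSet_image, Set.image_singleton]
    exact measurableSet_singleton _

lemma binomialRandom_real_disjoint_edgeSet [Countable V] (p : I) {F : Finset (Sym2 V)}
    (hF : ↑F ⊆ (Sym2.diagSetᶜ : Set (Sym2 V))) :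
    G(V, p).real {G | Disjoint G.edgeSet ↑F} = (1 - p : ℝ) ^ #F := by
  have hpre : SimpleGraph.fromEdgeSet ⁻¹' {G | Disjoint G.edgeSet ↑F} =
      {s : Set (Sym2 V) | Disjoint s ↑F} := by
    ext s
    simp only [Set.mem_preimage, Set.mem_ofPred_eq, SimpleGraph.edgeSet_fromEdgeSet]
    grind
  have hmeas : MeasurableSet {G : SimpleGraph V | Disjoint G.edgeSet ↑F} := by
    simp only [Set.disjoint_right]
    measurability
  rw [SimpleGraph.binomialRandom_eq_map,
    map_measureReal_apply SimpleGraph.measurable_fromEdgeSet hmeas, hpre,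
    setBernoulli_real_disjoint p hF]

lemma binomialRandom_real_disjoint_neighborSet [Countable V] (p : I) {v : V} {S : Finset V}
    (hv : v ∉ S) :
    G(V, p).real {G | Disjoint (G.neighborSet v) ↑S} = (1 - p : ℝ) ^ #S := by
  let F : Finset (Sym2 V) := S.map ⟨(s(v, ·)), fun _ _ ↦ Sym2.congr_right.1⟩
  have hF_coe : (F : Set (Sym2 V)) = (s(v, ·)) '' S := Finset.coe_map _ _
  have hF : ↑F ⊆ (Sym2.diagSetᶜ : Set (Sym2 V)) := by
    rw [hF_coe, Set.image_subset_iff]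
    intro w hw hvw
    exact hv ((Sym2.mk_isDiag_iff.1 hvw : v = w) ▸ hw)
  have hdisj (G : SimpleGraph V) : Disjoint (G.neighborSet v) ↑S ↔ Disjoint G.edgeSet ↑F := by
    simp only [hF_coe, Set.disjoint_right, Set.forall_mem_image, SimpleGraph.mem_neighborSet,
      SimpleGraph.mem_edgeSet]
  simp only [hdisj, binomialRandom_real_disjoint_edgeSet p hF, F, Finset.card_map]

variable [Fintype V]

open Classical in
lemma exists_disjoint_neighborSet_of_degree_lt {G : SimpleGraph V} {v : V} {d : ℕ}
    (h : G.degree v < d) :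
    ∃ S ∈ (Finset.univ.erase v).powersetCard (Fintype.card V - d),
      Disjoint (G.neighborSet v) ↑S := by
  have hcard : Fintype.card V - d ≤ #(Finset.univ.erase v \ G.neighborFinset v) :=
    calc Fintype.card V - d
        ≤ #(Finset.univ.erase v) - #(G.neighborFinset v) := by
          rw [Finset.card_erase_of_mem (Finset.mem_univ v), Finset.card_univ,
            G.card_neighborFinset_eq_degree]
          lia
      _ ≤ #(Finset.univ.erase v \ G.neighborFinset v) := Finset.le_card_sdiff _ _
  obtain ⟨S, hS, hScard⟩ := Finset.exists_subset_card_eq hcard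
  obtain ⟨hSv, hSdisj⟩ := Finset.subset_sdiff.1 hS
  refine ⟨S, Finset.mem_powersetCard.2 ⟨hSv, hScard⟩, ?_⟩
  rw [← G.coe_neighborFinset, Finset.disjoint_coe]
  exact hSdisj.symm

open Classical in
lemma binomialRandom_real_degree_lt_le (p : I) (v : V) (d : ℕ) :
    G(V, p).real {G | G.degree v < d} ≤
      (Fintype.card V - 1).choose (Fintype.card V - d) *
        (1 - p : ℝ) ^ (Fintype.card V - d) := by
  let 𝒮 := (Finset.univ.erase v).powersetCard (Fintype.card V - d)
  calc G(V, p).real {G | G.degree v < d}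
      ≤ G(V, p).real (⋃ S ∈ 𝒮, {G | Disjoint (G.neighborSet v) ↑S}) := by
        refine measureReal_mono (fun G hG ↦ ?_) (measure_ne_top _ _)
        simpa only [Set.mem_iUnion₂, exists_prop, Set.mem_ofPred_eq] using
          exists_disjoint_neighborSet_of_degree_lt hG
    _ ≤ ∑ S ∈ 𝒮, G(V, p).real {G | Disjoint (G.neighborSet v) ↑S} :=
        measureReal_biUnion_finset_le _ _
    _ = ∑ _ ∈ 𝒮, (1 - p : ℝ) ^ (Fintype.card V - d) := by
        refine Finset.sum_congr rfl fun S hS ↦ ?_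
        obtain ⟨hSv, hScard⟩ := Finset.mem_powersetCard.1 hS
        rw [binomialRandom_real_disjoint_neighborSet p fun hv ↦ Finset.notMem_erase v _ (hSv hv),
          hScard]
    _ = _ := by
        rw [Finset.sum_const, Finset.card_powersetCard,
          Finset.card_erase_of_mem (Finset.mem_univ v), Finset.card_univ, nsmul_eq_mul]

open Classical in
theorem prob_minDegree_lt_le_general {d : ℕ} (hd1 : 1 ≤ d) (hdn : d ≤ Fintype.card V) (p : I) :
    G(V, p).real {G | G.minDegree < d} ≤
      Fintype.card V * (Fintype.card V - 1).choose (d - 1) *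
        (1 - p : ℝ) ^ (Fintype.card V - d) := by
  have : Nonempty V := Fintype.card_pos_iff.1 (by lia)
  calc G(V, p).real {G | G.minDegree < d}
      ≤ G(V, p).real (⋃ v, {G | G.degree v < d}) := by
        refine measureReal_mono fun G hG ↦ ?_
        obtain ⟨v, hv⟩ := G.exists_minimal_degree_vertex
        exact Set.mem_iUnion.2 ⟨v, hv.symm.trans_lt hG⟩
    _ ≤ ∑ v, G(V, p).real {G | G.degree v < d} := measureReal_iUnion_fintype_le _
    _ ≤ ∑ _v : V, (Fintype.card V - 1).choose (Fintype.card V - d) *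
          (1 - p : ℝ) ^ (Fintype.card V - d) :=
        Finset.sum_le_sum fun v _ ↦ binomialRandom_real_degree_lt_le p v d
    _ = _ := by
        rw [Nat.choose_symm_of_eq_add (by lia : Fintype.card V - 1 = Fintype.card V - d + (d - 1)),
          Finset.sum_const, Finset.card_univ, nsmul_eq_mul, mul_assoc]

end RandomGraph

lemma erProb_eq_binomialRandom_real (n : ℕ) (p : I) (A : SimpleGraph (Fin n) → Prop) :
    erProb n p A = G(Fin n, p).real {G | A G} := by
  classical
  have hweight (G : SimpleGraph (Fin n)) : G(Fin n, p).real {G} =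
      (p : ℝ) ^ G.edgeSet.ncard * (1 - p : ℝ) ^ (n.choose 2 - G.edgeSet.ncard) := by
    simp [measureReal_def]
  simp only [erProb, ← hweight, ← Finset.sum_filter, sum_measureReal_singleton,
    Finset.coe_filter_univ]

open Classical in
lemma minDeg_eq_minDegree {n : ℕ} (G : SimpleGraph (Fin n)) : minDeg G = G.minDegree := by
  have hdeg (v : Fin n) : (G.neighborSet v).ncard = G.degree v := by
    simp only [← G.coe_neighborFinset, Set.ncard_coe_finset, G.card_neighborFinset_eq_degree]
  simp only [minDeg, hdeg]
  cases isEmpty_or_nonempty (Fin n)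
  · simp
  · obtain ⟨v, hv⟩ := G.exists_minimal_degree_vertex
    exact le_antisymm (hv ▸ ciInf_le' _ v) (le_ciInf G.minDegree_le_degree)

theorem prob_minDegree_lt_le (n d : ℕ) (hd1 : 1 ≤ d) (hdn : d ≤ n)
    (p : ℝ) (hp0 : 0 ≤ p) (hp1 : p ≤ 1) :
    erProb n p (fun G => minDeg G < d) ≤
      n * (n - 1).choose (d - 1) * (1 - p) ^ (n - d) := by
  lift p to I using ⟨hp0, hp1⟩
  simpa only [erProb_eq_binomialRandom_real, minDeg_eq_minDegree, Fintype.card_fin] using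
    prob_minDegree_lt_le_general hd1 (hdn.trans_eq (Fintype.card_fin n).symm) p
end

section
/- Let d : ℕ → ℕ satisfy d(n) ≥ 1 for all n, and let p : ℕ → ℝ satisfy 0 < p(n) < 1/2 for all n and n·p(n)/(d(n)·log n) → ∞ as n → ∞. Then the Erdős–Rényi probability that a graph drawn from G(n, p(n)) has minimum degree at most d(n) is at most exp(−p(n)·n·(1 + o(1))); that is, for every ε > 0 there exists N such that for all n ≥ N, P(δ(G(n,p(n))) ≤ d(n)) ≤ exp(−(1−ε)·n·p(n)). -/
/-!
By the union bound, the minimum degree is at most `k` with probability at most the sum over the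
vertices `v` of the probability that `v` has degree at most `k`. The degree of `v` counts the
present edges among the `n - 1` pairs at `v`, so its generating function is
`(1 - p + p * t) ^ (n - 1)`, and Markov's inequality for `t ^ deg v` with `0 < t ≤ 1` bounds each
term by `t⁻ᵏ * exp (-(1 - t) * p * (n - 1))`. Fixing `t < ε / 2`, the remaining factor
`n * t⁻ᵏ * exp p` is `exp (O (k * log n))`, which is absorbed by `exp (ε / 2 * n * p)` once
`n * p / (k * log n)` is large.
-/

open Filter Finset

open Classical in
theorem prod_edgeFinset_ite_mem {V M : Type*} [CommMonoid M] (G : SimpleGraph V)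
    [Fintype G.edgeSet] (v : V) (a : M) :
    ∏ e ∈ G.edgeFinset, (if v ∈ e then a else 1) = a ^ (G.neighborSet v).ncard := by
  have coe_filter_mem : ({e ∈ G.edgeFinset | v ∈ e} : Set (Sym2 V)) = G.incidenceSet v := by
    simp only [SimpleGraph.mem_edgeFinset, SimpleGraph.incidenceSet]
  rw [← prod_filter, prod_const, ← Set.ncard_coe_finset, coe_filter, coe_filter_mem,
    ← Nat.card_coe_set_eq, ← Nat.card_coe_set_eq,
    Nat.card_congr (G.incidenceSetEquivNeighborSet v)]

section EdgeGeneratingFunction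

variable {V R : Type*} [Fintype V]

open Classical in
theorem sum_simpleGraph_prod_mul_prod_compl [Fintype (SimpleGraph V)] [CommSemiring R]
    (f g : Sym2 V → R) :
    ∑ G : SimpleGraph V, (∏ e ∈ G.edgeFinset, f e) *
        ∏ e ∈ (⊤ : SimpleGraph V).edgeFinset \ G.edgeFinset, g e =
      ∏ e ∈ (⊤ : SimpleGraph V).edgeFinset, (f e + g e) := by
  rw [prod_add]
  refine sum_bij' (fun G _ ↦ G.edgeFinset) (fun S _ ↦ SimpleGraph.fromEdgeSet (S : Set (Sym2 V)))
    (fun G _ ↦ mem_powerset.2 (SimpleGraph.edgeFinset_mono le_top)) (by simp) (by simp) ?_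
    (fun G _ ↦ rfl)
  intro S hS
  have not_isDiag (e : Sym2 V) (he : e ∈ S) : ¬ e.IsDiag := by simpa using mem_powerset.1 hS he
  ext e
  simpa using not_isDiag e

/-- The probability of drawing `G` from the Erdős–Rényi model on the vertex set `V` with edge
probability `p`, as a polynomial in `p` over any commutative ring. -/
noncomputable def erWeight [CommRing R] (p : R) (G : SimpleGraph V) : R :=
  p ^ G.edgeSet.ncard * (1 - p) ^ ((Fintype.card V).choose 2 - G.edgeSet.ncard)

theorem erWeight_nonneg [CommRing R] [PartialOrder R] [IsOrderedRing R] {p : R}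
    (hp0 : 0 ≤ p) (hp1 : p ≤ 1) (G : SimpleGraph V) : 0 ≤ erWeight p G :=
  mul_nonneg (pow_nonneg hp0 _) (pow_nonneg (sub_nonneg.2 hp1) _)

open Classical in
theorem erWeight_eq_prod_mul_prod_compl [CommRing R] (p : R) (G : SimpleGraph V) :
    erWeight p G = (∏ _e ∈ G.edgeFinset, p) *
      ∏ _e ∈ (⊤ : SimpleGraph V).edgeFinset \ G.edgeFinset, (1 - p) := by
  rw [erWeight, prod_const, prod_const, card_sdiff_of_subset (SimpleGraph.edgeFinset_mono le_top),
    SimpleGraph.card_edgeFinset_top_eq_card_choose_two, ← SimpleGraph.coe_edgeFinset,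
    Set.ncard_coe_finset]

open Classical in
theorem sum_erWeight_mul_prod [Fintype (SimpleGraph V)] [CommRing R] (p : R) (x : Sym2 V → R) :
    ∑ G : SimpleGraph V, erWeight p G * ∏ e ∈ G.edgeFinset, x e =
      ∏ e ∈ (⊤ : SimpleGraph V).edgeFinset, (1 - p + p * x e) := by
  simp_rw [add_comm (1 - p), ← sum_simpleGraph_prod_mul_prod_compl, erWeight_eq_prod_mul_prod_compl,
    prod_mul_distrib, mul_right_comm]

open Classical in
theorem sum_erWeight_mul_pow_degree [Fintype (SimpleGraph V)] [CommRing R] (p t : R) (v : V) :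
    ∑ G : SimpleGraph V, erWeight p G * t ^ (G.neighborSet v).ncard =
      (1 - p + p * t) ^ (Fintype.card V - 1) := by
  have factor (e : Sym2 V) : 1 - p + p * (if v ∈ e then t else 1) =
      if v ∈ e then 1 - p + p * t else 1 := by
    split_ifs <;> ring
  have degree_top : ((⊤ : SimpleGraph V).neighborSet v).ncard = Fintype.card V - 1 := by
    rw [← Nat.card_coe_set_eq, Nat.card_eq_fintype_card, SimpleGraph.card_neighborSet_eq_degree,
      SimpleGraph.complete_graph_degree]
  simp_rw [← prod_edgeFinset_ite_mem, sum_erWeight_mul_prod, factor, prod_edgeFinset_ite_mem,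
    degree_top]

end EdgeGeneratingFunction

section ErdosRenyi

variable {n : ℕ} {p t : ℝ}

open Classical in
theorem erProb_eq_sum_erWeight (n : ℕ) (p : ℝ) (A : SimpleGraph (Fin n) → Prop) :
    erProb n p A = ∑ G, if A G then erWeight p G else 0 := by
  simp only [erProb, erWeight, Fintype.card_fin]

open Classical in
theorem erProb_le_sum_erWeight_mul (hp0 : 0 ≤ p) (hp1 : p ≤ 1) {A : SimpleGraph (Fin n) → Prop}
    {X : SimpleGraph (Fin n) → ℝ} (hX : ∀ G, 0 ≤ X G) (hAX : ∀ G, A G → 1 ≤ X G) :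
    erProb n p A ≤ ∑ G, erWeight p G * X G := by
  rw [erProb_eq_sum_erWeight]
  refine sum_le_sum fun G _ ↦ ?_
  have weight_nonneg := erWeight_nonneg hp0 hp1 G
  split_ifs with hA
  · exact le_mul_of_one_le_right weight_nonneg (hAX G hA)
  · exact mul_nonneg weight_nonneg (hX G)

theorem erProb_exists_le_sum {ι : Type*} [Fintype ι] (hp0 : 0 ≤ p) (hp1 : p ≤ 1)
    (A : ι → SimpleGraph (Fin n) → Prop) :
    erProb n p (fun G ↦ ∃ i, A i G) ≤ ∑ i, erProb n p (A i) := by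
  classical
  have indicator_nonneg (G : SimpleGraph (Fin n)) (i : ι) : (0 : ℝ) ≤ if A i G then 1 else 0 := by
    positivity
  calc erProb n p (fun G ↦ ∃ i, A i G)
      ≤ ∑ G, erWeight p G * ∑ i, if A i G then 1 else 0 := by
        refine erProb_le_sum_erWeight_mul hp0 hp1
          (fun G ↦ sum_nonneg fun i _ ↦ indicator_nonneg G i) ?_
        rintro G ⟨i, hi⟩
        simpa only [if_pos hi] using
          single_le_sum (fun j _ ↦ indicator_nonneg G j) (mem_univ i)
    _ = ∑ i, erProb n p (A i) := by
        simp_rw [erProb_eq_sum_erWeight, mul_sum, mul_ite, mul_one, mul_zero]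
        exact sum_comm

theorem erProb_degree_le (hp0 : 0 ≤ p) (hp1 : p ≤ 1) (ht0 : 0 < t) (ht1 : t ≤ 1) (v : Fin n)
    (k : ℕ) :
    erProb n p (fun G ↦ (G.neighborSet v).ncard ≤ k) ≤
      (t ^ k)⁻¹ * (1 - p + p * t) ^ (n - 1) := by
  classical
  calc erProb n p (fun G ↦ (G.neighborSet v).ncard ≤ k)
      ≤ ∑ G, erWeight p G * ((t ^ k)⁻¹ * t ^ (G.neighborSet v).ncard) := by
        refine erProb_le_sum_erWeight_mul hp0 hp1 (fun G ↦ by positivity) fun G hG ↦ ?_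
        rw [inv_mul_eq_div, one_le_div (by positivity)]
        exact pow_le_pow_of_le_one ht0.le ht1 hG
    _ = (t ^ k)⁻¹ * (1 - p + p * t) ^ (n - 1) := by
        simp_rw [mul_left_comm (erWeight p _), ← mul_sum, sum_erWeight_mul_pow_degree,
          Fintype.card_fin]

theorem minDeg_le_iff_exists [NeZero n] {G : SimpleGraph (Fin n)} {k : ℕ} :
    minDeg G ≤ k ↔ ∃ v, (G.neighborSet v).ncard ≤ k := by
  refine ⟨fun h ↦ ?_, fun ⟨v, hv⟩ ↦ (ciInf_le' _ v).trans hv⟩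
  obtain ⟨v, hv⟩ := exists_eq_ciInf_of_finite (f := fun v ↦ (G.neighborSet v).ncard)
  exact ⟨v, hv.trans_le h⟩

theorem erProb_minDeg_le [NeZero n] (hp0 : 0 ≤ p) (hp1 : p ≤ 1) (ht0 : 0 < t) (ht1 : t ≤ 1)
    (k : ℕ) :
    erProb n p (fun G ↦ minDeg G ≤ k) ≤ n * ((t ^ k)⁻¹ * (1 - p + p * t) ^ (n - 1)) := by
  simp_rw [minDeg_le_iff_exists]
  refine (erProb_exists_le_sum hp0 hp1 _).trans ?_
  simpa using sum_le_card_nsmul univ _ _ fun v _ ↦ erProb_degree_le hp0 hp1 ht0 ht1 v k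

theorem one_sub_add_mul_pow_pred_le_exp [NeZero n] (hp0 : 0 ≤ p) (hp1 : p ≤ 1) (ht0 : 0 ≤ t) :
    (1 - p + p * t) ^ (n - 1) ≤ Real.exp (1 - (1 - t) * (n * p)) := by
  have base_nonneg : 0 ≤ 1 - p + p * t := add_nonneg (sub_nonneg.2 hp1) (mul_nonneg hp0 ht0)
  have base_le : 1 - p + p * t ≤ Real.exp (-((1 - t) * p)) := by
    linarith [Real.add_one_le_exp (-((1 - t) * p))]
  calc (1 - p + p * t) ^ (n - 1)
      ≤ Real.exp (-((1 - t) * p)) ^ (n - 1) := pow_le_pow_left₀ base_nonneg base_le _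
    _ = Real.exp ((1 - t) * p - (1 - t) * (n * p)) := by
        rw [← Real.exp_nat_mul, Nat.cast_pred (NeZero.pos n)]
        ring_nf
    _ ≤ Real.exp (1 - (1 - t) * (n * p)) := by
        gcongr
        linarith

theorem erProb_minDeg_le_exp [NeZero n] (hp0 : 0 ≤ p) (hp1 : p ≤ 1) (ht0 : 0 < t) (ht1 : t ≤ 1)
    (k : ℕ) :
    erProb n p (fun G ↦ minDeg G ≤ k) ≤
      Real.exp (1 + Real.log n + k * -Real.log t - (1 - t) * (n * p)) := by
  have n_pos : (0 : ℝ) < n := Nat.cast_pos.2 (NeZero.pos n)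
  calc erProb n p (fun G ↦ minDeg G ≤ k)
      ≤ n * ((t ^ k)⁻¹ * (1 - p + p * t) ^ (n - 1)) := erProb_minDeg_le hp0 hp1 ht0 ht1 k
    _ ≤ n * ((t ^ k)⁻¹ * Real.exp (1 - (1 - t) * (n * p))) := by
        gcongr
        exact one_sub_add_mul_pow_pred_le_exp hp0 hp1 ht0.le
    _ = Real.exp (Real.log n + (k * -Real.log t + (1 - (1 - t) * (n * p)))) := by
        rw [Real.exp_add, Real.exp_add, Real.exp_log n_pos, Real.exp_nat_mul, Real.exp_neg,
          Real.exp_log ht0, inv_pow]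
    _ = Real.exp (1 + Real.log n + k * -Real.log t - (1 - t) * (n * p)) := by ring_nf

end ErdosRenyi

theorem eventually_one_add_add_mul_le_of_tendsto_div_mul {α : Type*} {l : Filter α}
    {x k y : α → ℝ} (hk : ∀ i, 1 ≤ k i) (hy : Tendsto y l atTop)
    (hx : Tendsto (fun i ↦ x i / (k i * y i)) l atTop) {a c : ℝ} (ha : 0 ≤ a) (hc : 0 < c) :
    ∀ᶠ i in l, 1 + y i + k i * a ≤ c * x i := by
  filter_upwards [hy.eventually_ge_atTop 1, hx.eventually_ge_atTop ((2 + a) / c)]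
    with i one_le_y ratio_ge
  have one_le_ky : 1 ≤ k i * y i := one_le_mul_of_one_le_of_one_le (hk i) one_le_y
  have y_le_ky : y i ≤ k i * y i := le_mul_of_one_le_left (by linarith) (hk i)
  have k_le_ky : k i ≤ k i * y i := le_mul_of_one_le_right (by linarith [hk i]) one_le_y
  calc 1 + y i + k i * a ≤ k i * y i + k i * y i + k i * y i * a := by gcongr
    _ = (2 + a) * (k i * y i) := by ring
    _ ≤ c * x i := by
        rw [div_le_div_iff₀ hc (by positivity)] at ratio_ge
        linarith

theorem prob_minDegree_le_of_large_p_general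
    (d : ℕ → ℕ) (hd : ∀ n, 1 ≤ d n)
    (p : ℕ → ℝ) (hp0 : ∀ n, 0 ≤ p n) (hp1 : ∀ n, p n ≤ 1)
    (hlim : Tendsto (fun n : ℕ ↦ n * p n / (d n * Real.log n)) atTop atTop)
    (ε : ℝ) (hε : 0 < ε) :
    ∃ N : ℕ, ∀ n ≥ N,
      erProb n (p n) (fun G ↦ minDeg G ≤ d n) ≤ Real.exp (-(1 - ε) * n * p n) := by
  obtain ⟨t, ht0, ht⟩ := exists_between (lt_min one_pos (half_pos hε))
  obtain ⟨ht1, htε⟩ := lt_min_iff.1 ht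
  have log_t_nonpos : Real.log t ≤ 0 := Real.log_nonpos ht0.le ht1.le
  have tendsto_log : Tendsto (fun n : ℕ ↦ Real.log n) atTop atTop :=
    Real.tendsto_log_atTop.comp tendsto_natCast_atTop_atTop
  rw [← eventually_atTop]
  filter_upwards [eventually_ne_atTop 0, eventually_one_add_add_mul_le_of_tendsto_div_mul
    (fun n ↦ Nat.one_le_cast.2 (hd n)) tendsto_log hlim (neg_nonneg.2 log_t_nonpos) (half_pos hε)]
    with n n_ne_zero error_le
  have : NeZero n := ⟨n_ne_zero⟩
  have t_mul_le : t * (n * p n) ≤ ε / 2 * (n * p n) :=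
    mul_le_mul_of_nonneg_right htε.le (mul_nonneg n.cast_nonneg (hp0 n))
  refine (erProb_minDeg_le_exp (hp0 n) (hp1 n) ht0 ht1.le (d n)).trans (Real.exp_le_exp.2 ?_)
  linarith

theorem prob_minDegree_le_of_large_p
    (d : ℕ → ℕ) (hd : ∀ n, 1 ≤ d n)
    (p : ℕ → ℝ) (hp0 : ∀ n, 0 < p n) (hp1 : ∀ n, p n < 1 / 2)
    (hlim : Filter.Tendsto (fun n : ℕ => n * p n / (d n * Real.log n))
      Filter.atTop Filter.atTop) :
    ∀ ε : ℝ, 0 < ε → ∃ N : ℕ, ∀ n ≥ N,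
      erProb n (p n) (fun G => minDeg G ≤ d n) ≤
        Real.exp (-(1 - ε) * n * p n) :=
  prob_minDegree_le_of_large_p_general d hd p (fun n ↦ (hp0 n).le)
    (fun n ↦ (hp1 n).le.trans (by norm_num)) hlim
end
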